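/- Let {E_ℓ} be a Kraus family on the d₁×d₁ complex matrices whose channel is faithful, let {C_ℓ} be d₁×d₂ and {D_ℓ} be d₂×d₂ complex matrices (over the same finite index set) with ∑_ℓ E_ℓ† C_ℓ = 0 and ∑_ℓ (C_ℓ† C_ℓ + D_ℓ† D_ℓ) = I_{d₂}, and form the block upper-triangular Kraus family A_ℓ = [[E_ℓ, C_ℓ],[0, D_ℓ]] on the (d₁+d₂)×(d₁+d₂) matrices. Let λ ∈ ℝ and suppose the linear map X ↦ ∑_ℓ E_ℓ† X D_ℓ on d₁×d₂ matrices and the linear map Y ↦ ∑_ℓ D_ℓ† Y E_ℓ on d₂×d₁ matrices each have no eigenvalue equal to e^{−iλ}. If a (d₁+d₂)×(d₁+d₂) matrix J = [[J₁₁, J₁₂],[J₂₁, J₂₂]] satisfies ∑_ℓ A_ℓ† J A_ℓ = e^{−iλ} J, then its off-diagonal blocks vanish: J₁₂ = 0 and J₂₁ = 0. -/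

import Mathlib

open Matrix ComplexOrder

theorem aux_posDef_zero {n : ℕ} {ρ K : Matrix (Fin n) (Fin n) ℂ} (hρ : ρ.PosDef)
    (h : K * ρ * Kᴴ = 0) : K = 0 := by
  have hK : Kᴴ = 0 := by
    apply Matrix.ext_of_mulVec_single
    intro i
    rw [Matrix.zero_mulVec]
    by_contra hne
    have hp := hρ.dotProduct_mulVec_pos hne
    rw [Matrix.star_mulVec, Matrix.conjTranspose_conjTranspose, ← Matrix.dotProduct_mulVec,
      Matrix.mulVec_mulVec, Matrix.mulVec_mulVec, h, Matrix.zero_mulVec,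
      dotProduct_zero] at hp
    exact lt_irrefl _ hp
  simpa using hK

theorem aux_comm {n : ℕ} {ι : Type*} [Fintype ι] (E : ι → Matrix (Fin n) (Fin n) ℂ)
    (hKraus : ∑ l, (E l)ᴴ * E l = 1) {ρ : Matrix (Fin n) (Fin n) ℂ} (hρ : ρ.PosDef)
    (hfix : ∑ l, E l * ρ * (E l)ᴴ = ρ) (w : ℂ) (hw : w * star w = 1)
    (J : Matrix (Fin n) (Fin n) ℂ) (hJ : ∑ l, (E l)ᴴ * J * E l = w • J) (l : ι) :
    J * E l = w • (E l * J) := by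
  have hJ' : ∑ l, (E l)ᴴ * Jᴴ * E l = star w • Jᴴ := by
    have := congrArg Matrix.conjTranspose hJ
    simpa [Matrix.conjTranspose_sum, Matrix.mul_assoc] using this
  set K : ι → Matrix (Fin n) (Fin n) ℂ := fun l => J * E l - w • (E l * J) with hKdef
  have hsum : ∑ l, (K l)ᴴ * K l = ∑ l, (E l)ᴴ * (Jᴴ * J) * E l - Jᴴ * J := by
    have e : ∀ l, (K l)ᴴ * K l = (E l)ᴴ * (Jᴴ * J) * E l - w • (((E l)ᴴ * Jᴴ * E l) * J)
        - star w • (Jᴴ * ((E l)ᴴ * J * E l)) + (w * star w) • (Jᴴ * ((E l)ᴴ * E l) * J) := by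
      intro l
      simp only [hKdef, Matrix.conjTranspose_sub, Matrix.conjTranspose_smul,
        Matrix.conjTranspose_mul, Matrix.sub_mul, Matrix.mul_sub, Matrix.smul_mul,
        Matrix.mul_smul, Matrix.mul_assoc, smul_sub, smul_smul]
      abel
    simp only [e, Finset.sum_add_distrib, Finset.sum_sub_distrib, ← Finset.smul_sum,
      ← Matrix.sum_mul, ← Matrix.mul_sum, hJ', hKraus]
    have h2 : ∑ l, (E l)ᴴ * J * E l = w • J := hJ
    rw [h2]
    simp only [Matrix.smul_mul, Matrix.mul_smul, smul_smul, hw, mul_comm (star w) w, one_smul,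
      Matrix.mul_one]
    abel
  have htr : ∑ l, (K l * ρ * (K l)ᴴ).trace = 0 := by
    have e1 : ∀ l, (K l * ρ * (K l)ᴴ).trace = (ρ * ((K l)ᴴ * K l)).trace := by
      intro l
      rw [Matrix.mul_assoc, Matrix.trace_mul_comm, Matrix.mul_assoc]
    have e2 : ∀ l, (ρ * ((E l)ᴴ * (Jᴴ * J) * E l)).trace
        = ((E l * ρ * (E l)ᴴ) * (Jᴴ * J)).trace := by
      intro l
      rw [← Matrix.mul_assoc, Matrix.trace_mul_comm]
      simp only [Matrix.mul_assoc]
    simp only [e1]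
    rw [← Matrix.trace_sum, ← Matrix.mul_sum, hsum, Matrix.mul_sub, Matrix.trace_sub,
      Matrix.mul_sum, Matrix.trace_sum]
    simp only [e2]
    rw [← Matrix.trace_sum, ← Matrix.sum_mul, hfix, sub_self]
  have hps : ∀ l, (K l * ρ * (K l)ᴴ).PosSemidef := fun l =>
    hρ.posSemidef.mul_mul_conjTranspose_same (K l)
  have hz := (Finset.sum_eq_zero_iff_of_nonneg (fun l _ => (hps l).trace_nonneg)).1 htr l
    (Finset.mem_univ l)
  have hK0 : K l = 0 := aux_posDef_zero hρ ((hps l).trace_eq_zero_iff.1 hz)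
  exact sub_eq_zero.1 hK0

/-- For an extended channel `Aℓ = [[Eℓ, Cℓ], [0, Dℓ]]` whose off-diagonal
superoperator blocks `X ↦ ∑ ℓ, Eℓᴴ X Dℓ` and `Y ↦ ∑ ℓ, Dℓᴴ Y Eℓ` have no eigenvalue `e^{-iλ}`,
any conserved quantity `J` with phase `λ` has vanishing off-diagonal blocks. -/
theorem conserved_quantity_offdiagonal_blocks_vanish
    {d₁ d₂ : ℕ} {ι : Type*} [Fintype ι]
    (E : ι → Matrix (Fin d₁) (Fin d₁) ℂ)
    (hKraus : ∑ ℓ, (E ℓ)ᴴ * E ℓ = 1)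
    (hFaithful : ∃ ρ : Matrix (Fin d₁) (Fin d₁) ℂ,
      ρ.PosDef ∧ ∑ ℓ, E ℓ * ρ * (E ℓ)ᴴ = ρ)
    (C : ι → Matrix (Fin d₁) (Fin d₂) ℂ)
    (Dm : ι → Matrix (Fin d₂) (Fin d₂) ℂ)
    (hC : ∑ ℓ, (E ℓ)ᴴ * C ℓ = 0)
    (hQ : ∑ ℓ, ((C ℓ)ᴴ * C ℓ + (Dm ℓ)ᴴ * Dm ℓ) = 1)
    (lam : ℝ)
    (hur : ∀ X : Matrix (Fin d₁) (Fin d₂) ℂ,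
      (∑ ℓ, (E ℓ)ᴴ * X * Dm ℓ) = Complex.exp (-(Complex.I * (lam : ℂ))) • X → X = 0)
    (hll : ∀ Y : Matrix (Fin d₂) (Fin d₁) ℂ,
      (∑ ℓ, (Dm ℓ)ᴴ * Y * E ℓ) = Complex.exp (-(Complex.I * (lam : ℂ))) • Y → Y = 0)
    (J₁₁ : Matrix (Fin d₁) (Fin d₁) ℂ) (J₁₂ : Matrix (Fin d₁) (Fin d₂) ℂ)
    (J₂₁ : Matrix (Fin d₂) (Fin d₁) ℂ) (J₂₂ : Matrix (Fin d₂) (Fin d₂) ℂ)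
    (hJ : ∑ ℓ, (Matrix.fromBlocks (E ℓ) (C ℓ) 0 (Dm ℓ))ᴴ
        * Matrix.fromBlocks J₁₁ J₁₂ J₂₁ J₂₂
        * Matrix.fromBlocks (E ℓ) (C ℓ) 0 (Dm ℓ)
      = Complex.exp (-(Complex.I * (lam : ℂ))) • Matrix.fromBlocks J₁₁ J₁₂ J₂₁ J₂₂) :
    J₁₂ = 0 ∧ J₂₁ = 0 := by
  obtain ⟨ρ, hρ, hfix⟩ := hFaithful
  set w : ℂ := Complex.exp (-(Complex.I * (lam : ℂ))) with hwdef
  have hw : w * star w = 1 := by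
    rw [hwdef, Complex.star_def, ← Complex.exp_conj, ← Complex.exp_add]
    simp
  have hs : ∀ f : ι → Matrix (Fin d₁ ⊕ Fin d₂) (Fin d₁ ⊕ Fin d₂) ℂ, ∀ a b,
      (∑ l, f l) a b = ∑ l, f l a b := fun f a b => Matrix.sum_apply a b _ _
  simp only [Matrix.fromBlocks_conjTranspose, Matrix.fromBlocks_multiply,
    Matrix.fromBlocks_smul, Matrix.conjTranspose_zero, Matrix.zero_mul, Matrix.mul_zero,
    add_zero] at hJ
  have h11 : ∑ l, (E l)ᴴ * J₁₁ * E l = w • J₁₁ := by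
    ext i j
    have := congrFun (congrFun hJ (Sum.inl i)) (Sum.inl j)
    rw [hs] at this
    simpa [Matrix.sum_apply] using this
  have h12 : ∑ l, ((E l)ᴴ * J₁₁ * C l + (E l)ᴴ * J₁₂ * Dm l) = w • J₁₂ := by
    ext i j
    have := congrFun (congrFun hJ (Sum.inl i)) (Sum.inr j)
    rw [hs] at this
    simpa [Matrix.sum_apply] using this
  have h21 : ∑ l, ((C l)ᴴ * J₁₁ * E l + (Dm l)ᴴ * J₂₁ * E l) = w • J₂₁ := by
    ext i j
    have := congrFun (congrFun hJ (Sum.inr i)) (Sum.inl j)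
    rw [hs] at this
    simpa [Matrix.sum_apply, Matrix.add_mul] using this
  have h11' : ∑ l, (E l)ᴴ * J₁₁ᴴ * E l = star w • J₁₁ᴴ := by
    have := congrArg Matrix.conjTranspose h11
    simpa [Matrix.conjTranspose_sum, Matrix.mul_assoc] using this
  have c1 := aux_comm E hKraus hρ hfix w hw J₁₁ h11
  have c2 : ∀ l, (E l)ᴴ * J₁₁ = w • (J₁₁ * (E l)ᴴ) := by
    intro l
    have := congrArg Matrix.conjTranspose (aux_comm E hKraus hρ hfix (star w)
      (by rw [star_star, mul_comm]; exact hw) J₁₁ᴴ h11' l)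
    simpa using this
  have hC' : ∑ l, (C l)ᴴ * E l = 0 := by
    have := congrArg Matrix.conjTranspose hC
    simpa [Matrix.conjTranspose_sum] using this
  constructor
  · apply hur
    rw [← h12, Finset.sum_add_distrib]
    have : ∑ l, (E l)ᴴ * J₁₁ * C l = 0 := by
      simp only [c2, Matrix.smul_mul, Matrix.mul_assoc]
      rw [← Finset.smul_sum, ← Matrix.mul_sum, hC, Matrix.mul_zero, smul_zero]
    rw [this, zero_add]
  · apply hll
    rw [← h21, Finset.sum_add_distrib]
    have : ∑ l, (C l)ᴴ * J₁₁ * E l = 0 := by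
      simp only [Matrix.mul_assoc, c1, Matrix.mul_smul]
      simp only [← Matrix.mul_assoc]
      rw [← Finset.smul_sum, ← Matrix.sum_mul, hC', Matrix.zero_mul, smul_zero]
    rw [this, zero_add]
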